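/- Let n ≥ 2, θ > 0, and let X_1,…,X_n be i.i.d. Uniform[0,θ] random variables. Then m = (n+1)/(2n) is a median of the mean/max statistic τ_n = X̄_n / X_(n), i.e. P(τ_n ≤ m) = 1/2 = P(τ_n ≥ m). -/

import Mathlib

open MeasureTheory ProbabilityTheory

/-- The uniform probability measure on `[0, θ]`. -/
noncomputable def uniformMeasure (θ : ℝ) : Measure ℝ :=
  ENNReal.ofReal θ⁻¹ • volume.restrict (Set.Icc 0 θ)

/-- The joint law of an i.i.d. sample of size `n` from `Uniform[0, θ]`. -/
noncomputable def iidUniform (n : ℕ) (θ : ℝ) : Measure (Fin n → ℝ) :=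
  Measure.pi fun _ => uniformMeasure θ

/-- Sample maximum. -/
noncomputable def sampleMax {n : ℕ} (x : Fin n → ℝ) : ℝ := ⨆ i, x i

/-- Empirical mean. -/
noncomputable def sampleMean {n : ℕ} (x : Fin n → ℝ) : ℝ := (∑ i, x i) / n

/-- The mean/max statistic `τ_n`. -/
noncomputable def tau {n : ℕ} (x : Fin n → ℝ) : ℝ := sampleMean x / sampleMax x

/-- The kernel of a nonzero linear functional is Lebesgue-null. -/
theorem volume_setOf_linearMap_eq_zero {n : ℕ} (f : (Fin n → ℝ) →ₗ[ℝ] ℝ) (hf : f ≠ 0) :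
    volume {x | f x = 0} = 0 :=
  Measure.addHaar_submodule volume (LinearMap.ker f) (by simpa [LinearMap.ker_eq_top] using hf)

/-- A linear involution preserves Lebesgue measure. -/
theorem volume_preimage_of_linear_involution {n : ℕ} (f : (Fin n → ℝ) →ₗ[ℝ] (Fin n → ℝ))
    (hf : f ∘ₗ f = LinearMap.id) (s : Set (Fin n → ℝ)) :
    volume (f ⁻¹' s) = volume s := by
  have hdet : LinearMap.det f * LinearMap.det f = 1 := by
    rw [← LinearMap.det_comp, hf, LinearMap.det_id]
  have habs : |(LinearMap.det f)⁻¹| = 1 := by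
    rcases mul_self_eq_one_iff.mp hdet with h | h <;> simp [h]
  rw [Measure.addHaar_preimage_linearMap volume (left_ne_zero_of_mul_eq_one hdet), habs]
  simp

/-- Fix the `i`-th coordinate and replace every other coordinate `x j` by `x i - x j`. -/
noncomputable def reflectBelow {n : ℕ} (i : Fin n) : (Fin n → ℝ) →ₗ[ℝ] (Fin n → ℝ) :=
  LinearMap.pi fun j =>
    if j = i then LinearMap.proj (R := ℝ) (φ := fun _ => ℝ) i
    else LinearMap.proj (R := ℝ) (φ := fun _ => ℝ) i - LinearMap.proj j

theorem reflectBelow_apply {n : ℕ} (i j : Fin n) (x : Fin n → ℝ) :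
    reflectBelow i x j = if j = i then x i else x i - x j := by
  by_cases h : j = i <;> simp [reflectBelow, h]

theorem reflectBelow_comp_self {n : ℕ} (i : Fin n) :
    reflectBelow i ∘ₗ reflectBelow i = LinearMap.id := by
  refine LinearMap.ext fun x => funext fun j => ?_
  by_cases h : j = i <;> simp [reflectBelow_apply, h]

theorem sum_reflectBelow {n : ℕ} (i : Fin n) (x : Fin n → ℝ) :
    ∑ j, reflectBelow i x j = (n + 1) * x i - ∑ j, x j := by
  have h (j : Fin n) : reflectBelow i x j = (x i - x j) + if j = i then x i else 0 := by
    rw [reflectBelow_apply]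
    split_ifs with hj <;> simp [hj]
  simp only [h, Finset.sum_add_distrib, Finset.sum_sub_distrib]
  simp
  ring

/-- The samples in `[0, θ]` whose `i`-th entry is positive and maximal. -/
def maxAt {n : ℕ} (θ : ℝ) (i : Fin n) : Set (Fin n → ℝ) :=
  {x | 0 < x i ∧ x i ≤ θ ∧ ∀ j, 0 ≤ x j ∧ x j ≤ x i}

theorem reflectBelow_mem_maxAt {n : ℕ} {θ : ℝ} {i : Fin n} {x : Fin n → ℝ}
    (hx : x ∈ maxAt θ i) : reflectBelow i x ∈ maxAt θ i := by
  obtain ⟨h0, hθ, h⟩ := hx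
  refine ⟨by simpa [reflectBelow_apply] using h0, by simpa [reflectBelow_apply] using hθ,
    fun j => ?_⟩
  have := h j
  simp only [reflectBelow_apply, if_true]
  split_ifs
  · exact ⟨h0.le, le_rfl⟩
  · constructor <;> linarith

theorem reflectBelow_mem_maxAt_iff {n : ℕ} {θ : ℝ} {i : Fin n} {x : Fin n → ℝ} :
    reflectBelow i x ∈ maxAt θ i ↔ x ∈ maxAt θ i := by
  refine ⟨fun h => ?_, reflectBelow_mem_maxAt⟩
  simpa [← LinearMap.comp_apply, reflectBelow_comp_self] using reflectBelow_mem_maxAt h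

theorem tau_of_mem_maxAt {n : ℕ} {θ : ℝ} {i : Fin n} {x : Fin n → ℝ} (hx : x ∈ maxAt θ i) :
    tau x = (∑ j, x j) / n / x i := by
  have hmax : sampleMax x = x i :=
    le_antisymm (have : Nonempty (Fin n) := ⟨i⟩; ciSup_le fun j => (hx.2.2 j).2)
      (le_ciSup (Set.finite_range x).bddAbove i)
  rw [tau, sampleMean, hmax]

theorem tau_reflectBelow {n : ℕ} {θ : ℝ} {i : Fin n} {x : Fin n → ℝ} (hx : x ∈ maxAt θ i) :
    tau (reflectBelow i x) = ((n : ℝ) + 1) / n - tau x := by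
  have hn : (n : ℝ) ≠ 0 := Nat.cast_ne_zero.mpr i.pos.ne'
  have hxi : x i ≠ 0 := hx.1.ne'
  rw [tau_of_mem_maxAt (reflectBelow_mem_maxAt hx), tau_of_mem_maxAt hx, sum_reflectBelow]
  simp only [reflectBelow_apply, if_true]
  field_simp

theorem volume_maxAt_tau_le_eq {n : ℕ} (θ : ℝ) (i : Fin n) :
    volume (maxAt θ i ∩ {x | tau x ≤ ((n : ℝ) + 1) / (2 * n)}) =
      volume (maxAt θ i ∩ {x | ((n : ℝ) + 1) / (2 * n) ≤ tau x}) := by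
  rw [← volume_preimage_of_linear_involution _ (reflectBelow_comp_self i)]
  congr 1
  ext x
  simp only [Set.mem_preimage, Set.mem_inter_iff, reflectBelow_mem_maxAt_iff, Set.mem_ofPred_eq]
  refine and_congr_right fun hx => ?_
  have hhalf : ((n : ℝ) + 1) / n = 2 * (((n : ℝ) + 1) / (2 * n)) := by
    have hn : (n : ℝ) ≠ 0 := Nat.cast_ne_zero.mpr i.pos.ne'
    field_simp
  rw [tau_reflectBelow hx, hhalf]
  constructor <;> intro h <;> linarith

theorem measurableSet_maxAt {n : ℕ} (θ : ℝ) (i : Fin n) : MeasurableSet (maxAt θ i) := by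
  unfold maxAt
  measurability

theorem measurable_tau {n : ℕ} : Measurable (tau : (Fin n → ℝ) → ℝ) := by
  unfold tau sampleMean sampleMax
  refine Measurable.div (by fun_prop) (Measurable.iSup fun i => measurable_pi_apply i)

theorem aedisjoint_maxAt {n : ℕ} (θ : ℝ) :
    Pairwise (Function.onFun (AEDisjoint volume) (maxAt (n := n) θ)) := by
  intro i j hij
  refine measure_mono_null (fun x hx => ?_)
    (volume_setOf_linearMap_eq_zero (LinearMap.proj (R := ℝ) (φ := fun _ => ℝ) i -
      LinearMap.proj (R := ℝ) (φ := fun _ => ℝ) j) fun h => ?_)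
  · have h₁ := (hx.1.2.2 j).2
    have h₂ := (hx.2.2.2 i).2
    simp only [Set.mem_ofPred_eq, LinearMap.sub_apply, LinearMap.proj_apply]
    linarith
  · simpa [hij.symm] using LinearMap.congr_fun h (Pi.single i 1)

theorem iidUniform_eq (n : ℕ) (θ : ℝ) :
    iidUniform n θ = ENNReal.ofReal θ⁻¹ ^ n •
      volume.restrict (Set.univ.pi fun _ : Fin n => Set.Icc 0 θ) := by
  have : IsFiniteMeasure (uniformMeasure θ) := by
    unfold uniformMeasure
    exact Measure.smul_finite _ ENNReal.ofReal_ne_top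
  refine Measure.pi_eq fun s _ => ?_
  rw [volume_pi, Measure.restrict_pi_pi]
  simp [uniformMeasure, Finset.prod_mul_distrib, Measure.pi_pi]

theorem isProbabilityMeasure_iidUniform (n : ℕ) {θ : ℝ} (hθ : 0 < θ) :
    IsProbabilityMeasure (iidUniform n θ) := by
  have : IsProbabilityMeasure (uniformMeasure θ) := by
    refine ⟨?_⟩
    simp [uniformMeasure, ← ENNReal.ofReal_mul (inv_nonneg.mpr hθ.le), hθ.ne']
  unfold iidUniform
  infer_instance

theorem iidUniform_absolutelyContinuous (n : ℕ) (θ : ℝ) : iidUniform n θ ≪ volume := by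
  rw [iidUniform_eq]
  exact Measure.smul_absolutelyContinuous.trans Measure.restrict_le_self.absolutelyContinuous

theorem ae_mem_iUnion_maxAt {n : ℕ} (hn : 2 ≤ n) (θ : ℝ) :
    ∀ᵐ x ∂iidUniform n θ, x ∈ ⋃ i, maxAt θ i := by
  have : Nonempty (Fin n) := ⟨⟨0, by omega⟩⟩
  have hcube : ∀ᵐ x ∂iidUniform n θ, x ∈ Set.univ.pi fun _ : Fin n => Set.Icc 0 θ := by
    rw [iidUniform_eq]
    exact Measure.ae_smul_measure
      (ae_restrict_mem (MeasurableSet.univ_pi fun _ => measurableSet_Icc)) _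
  have hne : ∀ᵐ x ∂iidUniform n θ, ∀ i, x i ≠ 0 := by
    refine (iidUniform_absolutelyContinuous n θ).ae_le (ae_all_iff.mpr fun i => ?_)
    rw [ae_iff]
    simpa using volume_setOf_linearMap_eq_zero (LinearMap.proj i) fun h => by
      simpa using LinearMap.congr_fun h (Pi.single i 1)
  filter_upwards [hcube, hne] with x hx hx0
  obtain ⟨i, hi⟩ := Finite.exists_max x
  have hbox (j : Fin n) := hx j (Set.mem_univ j)
  exact Set.mem_iUnion.mpr
    ⟨i, (hbox i).1.lt_of_ne (hx0 i).symm, (hbox i).2, fun j => ⟨(hbox j).1, hi j⟩⟩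

/-- The `iidUniform` measure of a set, split according to the index of the maximum. -/
theorem iidUniform_eq_sum_maxAt {n : ℕ} (hn : 2 ≤ n) (θ : ℝ) {s : Set (Fin n → ℝ)}
    (hs : MeasurableSet s) :
    iidUniform n θ s = ENNReal.ofReal θ⁻¹ ^ n * ∑ i, volume (maxAt θ i ∩ s) := by
  have hsub (i : Fin n) : maxAt θ i ⊆ Set.univ.pi fun _ : Fin n => Set.Icc 0 θ :=
    fun x hx j _ => ⟨(hx.2.2 j).1, (hx.2.2 j).2.trans hx.2.1⟩
  have hcover : iidUniform n θ s = iidUniform n θ (⋃ i, maxAt θ i ∩ s) := by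
    refine measure_congr ?_
    filter_upwards [ae_mem_iUnion_maxAt hn θ] with x hx
    rw [← Set.iUnion_inter]
    exact propext ⟨fun h => ⟨hx, h⟩, fun h => h.2⟩
  rw [hcover, iidUniform_eq, Measure.smul_apply, smul_eq_mul, Measure.restrict_eq_self _
    (Set.iUnion_subset fun i => Set.inter_subset_left.trans (hsub i)), measure_iUnion₀
    (fun i j hij => (aedisjoint_maxAt θ hij).mono Set.inter_subset_left Set.inter_subset_left)
    (fun i => ((measurableSet_maxAt θ i).inter hs).nullMeasurableSet), tsum_fintype]

theorem iidUniform_tau_eq {n : ℕ} (hn : 2 ≤ n) (θ : ℝ) :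
    iidUniform n θ {x | tau x = ((n : ℝ) + 1) / (2 * n)} = 0 := by
  have hmeas : MeasurableSet {x : Fin n → ℝ | tau x = ((n : ℝ) + 1) / (2 * n)} :=
    measurable_tau (measurableSet_singleton _)
  rw [iidUniform_eq_sum_maxAt hn θ hmeas,
    Finset.sum_eq_zero, mul_zero]
  intro i _
  refine measure_mono_null (fun x hx => ?_) (volume_setOf_linearMap_eq_zero
    ((2 : ℝ) • (∑ j, LinearMap.proj j) - ((n : ℝ) + 1) • LinearMap.proj i) fun h => ?_)
  · have htau : tau x = ((n : ℝ) + 1) / (2 * n) := hx.2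
    have hxi : x i ≠ 0 := hx.1.1.ne'
    have hn0 : (n : ℝ) ≠ 0 := Nat.cast_ne_zero.mpr i.pos.ne'
    rw [tau_of_mem_maxAt hx.1] at htau
    field_simp at htau
    simp only [Set.mem_ofPred_eq, LinearMap.sub_apply, LinearMap.smul_apply, LinearMap.sum_apply,
      LinearMap.proj_apply, smul_eq_mul]
    linarith
  · have : Nontrivial (Fin n) := Fin.nontrivial_iff_two_le.mpr hn
    obtain ⟨k, hk⟩ := exists_ne i
    simpa [hk.symm] using LinearMap.congr_fun h (Pi.single k 1)

/-- Under an i.i.d. `Uniform[0,θ]` sample, `(n+1)/(2n)` is a median of `τ_n`: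
`P(τ_n ≤ m) = 1/2 = P(τ_n ≥ m)`. -/
theorem tau_median_uniform
    (n : ℕ) (hn : 2 ≤ n) (θ : ℝ) (hθ : 0 < θ) :
    iidUniform n θ {x | tau x ≤ ((n : ℝ) + 1) / (2 * n)} = 1 / 2 ∧
    iidUniform n θ {x | ((n : ℝ) + 1) / (2 * n) ≤ tau x} = 1 / 2 := by
  have := isProbabilityMeasure_iidUniform n hθ
  set m : ℝ := ((n : ℝ) + 1) / (2 * n) with hm
  have hle : MeasurableSet {x : Fin n → ℝ | tau x ≤ m} := measurable_tau measurableSet_Iic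
  have hge : MeasurableSet {x : Fin n → ℝ | m ≤ tau x} := measurable_tau measurableSet_Ici
  have heq : iidUniform n θ {x | tau x ≤ m} = iidUniform n θ {x | m ≤ tau x} := by
    rw [iidUniform_eq_sum_maxAt hn θ hle, iidUniform_eq_sum_maxAt hn θ hge]
    simp only [hm, volume_maxAt_tau_le_eq]
  have hdisj : AEDisjoint (iidUniform n θ) {x | tau x ≤ m} {x | m ≤ tau x} :=
    measure_mono_null (fun x hx => le_antisymm hx.1 hx.2) (iidUniform_tau_eq hn θ)
  have hsum := measure_union₀ hge.nullMeasurableSet hdisj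
  have huniv : {x : Fin n → ℝ | tau x ≤ m} ∪ {x | m ≤ tau x} = Set.univ :=
    Set.eq_univ_of_forall fun x => le_total (tau x) m
  rw [huniv, measure_univ, heq, ← two_mul] at hsum
  have hhalf : iidUniform n θ {x | m ≤ tau x} = 1 / 2 := by
    rw [ENNReal.eq_div_iff two_ne_zero ENNReal.ofNat_ne_top, ← hsum]
  exact ⟨heq.trans hhalf, hhalf⟩
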